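/- arXiv:1811.10902 — 5 statements merged into one kernel-verified Lean document; each statement's English description precedes it below -/
import Mathlib

section
/- Let n be a natural number, c ≥ 0 and λ > 0 real numbers, and let A and B be real n×n symmetric positive semidefinite matrices such that the diagonal entries of the Hadamard product satisfy (A ∘ B)ᵢᵢ ≤ c for all i. Then Real.log(det(A ∘ B + λI)/λⁿ) ≤ rank(A) · rank(B) · Real.log((n·c + λ)/λ). -/
open Matrix

/-- The dimension of a product of subspaces of an algebra is at most the product of the
dimensions. -/
theorem Submodule.finrank_mul_le_mul_finrank {K S : Type*} [Field K] [Ring S] [Algebra K S]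
    (M N : Submodule K S) [FiniteDimensional K M] [FiniteDimensional K N] :
    Module.finrank K (M * N : Submodule K S) ≤ Module.finrank K M * Module.finrank K N := by
  rw [← Submodule.mulMap_range, ← Module.finrank_tensorProduct]
  exact LinearMap.finrank_range_le _

/-- The rank of a Hadamard product is at most the product of the ranks. -/
theorem Matrix.rank_hadamard_le {m n K : Type*} [Fintype m] [Fintype n] [Field K]
    (A B : Matrix m n K) : (A ⊙ B).rank ≤ A.rank * B.rank := by
  simp only [rank_eq_finrank_span_cols]
  refine le_trans (Submodule.finrank_mono ?_) (Submodule.finrank_mul_le_mul_finrank _ _)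
  rw [Submodule.span_le]
  rintro _ ⟨j, rfl⟩
  exact Submodule.mul_mem_mul (Submodule.subset_span ⟨j, rfl⟩) (Submodule.subset_span ⟨j, rfl⟩)

theorem Matrix.IsHermitian.det_add_smul_one {n : Type*} [Fintype n] [DecidableEq n]
    {K : Matrix n n ℝ} (hK : K.IsHermitian) (t : ℝ) :
    (K + t • (1 : Matrix n n ℝ)).det = ∏ i, (hK.eigenvalues i + t) := by
  have hneg : K + t • (1 : Matrix n n ℝ) = -(scalar n (-t) - K) := by
    rw [scalar_apply, ← smul_one_eq_diagonal, neg_smul]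
    abel
  rw [hneg, det_neg, ← eval_charpoly, hK.charpoly_eq, Polynomial.eval_prod, ← Finset.card_univ,
    ← Finset.prod_const, ← Finset.prod_mul_distrib]
  refine Finset.prod_congr rfl fun i _ ↦ ?_
  simp

/-- For a positive semidefinite matrix, the log-determinant of its regularization is controlled by
its rank and trace. -/
theorem Matrix.PosSemidef.log_det_add_smul_one_div_le {n : Type*} [Fintype n] [DecidableEq n]
    {K : Matrix n n ℝ} (hK : K.PosSemidef) {t : ℝ} (ht : 0 < t) :
    Real.log ((K + t • (1 : Matrix n n ℝ)).det / t ^ Fintype.card n) ≤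
      K.rank * Real.log ((K.trace + t) / t) := by
  have hnn := hK.eigenvalues_nonneg
  have htrace : K.trace = ∑ i, hK.isHermitian.eigenvalues i := by
    simpa using hK.isHermitian.trace_eq_sum_eigenvalues
  rw [hK.isHermitian.det_add_smul_one, ← Finset.card_univ, ← Finset.prod_const,
    ← Finset.prod_div_distrib, Real.log_prod fun i _ ↦ by have := hnn i; positivity,
    hK.isHermitian.rank_eq_card_non_zero_eigs, Fintype.card_subtype, ← nsmul_eq_mul,
    ← Finset.sum_const, Finset.sum_filter]
  refine Finset.sum_le_sum fun i _ ↦ ?_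
  split_ifs with hi
  · have := hnn i
    have hle : hK.isHermitian.eigenvalues i ≤ K.trace :=
      htrace ▸ Finset.single_le_sum (fun j _ ↦ hnn j) (Finset.mem_univ i)
    gcongr
  · simp [ht.ne', not_not.mp hi]

/-- Theorem 4 of the paper: if `A` and `B` are positive semidefinite `n × n` matrices and the
diagonal entries of their Hadamard product are bounded by `c`, then
`log(det(A ∘ B + λI)/λⁿ) ≤ rank(A) · rank(B) · log((n c + λ)/λ)`. -/
theorem log_det_hadamard_le (n : ℕ) (c lam : ℝ) (hc : 0 ≤ c) (hlam : 0 < lam)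
    (A B : Matrix (Fin n) (Fin n) ℝ) (hA : A.PosSemidef) (hB : B.PosSemidef)
    (hdiag : ∀ i, Matrix.hadamard A B i i ≤ c) :
    Real.log ((Matrix.hadamard A B + lam • (1 : Matrix (Fin n) (Fin n) ℝ)).det / lam ^ n) ≤
      (A.rank * B.rank : ℕ) * Real.log ((n * c + lam) / lam) := by
  have hK : (A ⊙ B).PosSemidef := hA.hadamard hB
  have htr : (A ⊙ B).trace ≤ n * c := by
    simpa [trace] using Finset.sum_le_card_nsmul Finset.univ _ c fun i _ ↦ hdiag i
  have htr_nonneg := hK.trace_nonneg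
  calc Real.log ((A ⊙ B + lam • (1 : Matrix (Fin n) (Fin n) ℝ)).det / lam ^ n)
      ≤ (A ⊙ B).rank * Real.log (((A ⊙ B).trace + lam) / lam) := by
        simpa using hK.log_det_add_smul_one_div_le hlam
    _ ≤ (A.rank * B.rank : ℕ) * Real.log ((n * c + lam) / lam) := by
        have hlog : 0 ≤ Real.log (((A ⊙ B).trace + lam) / lam) :=
          Real.log_nonneg ((one_le_div hlam).mpr (by linarith))
        gcongr
        exact rank_hadamard_le A B
end

section
/- Let n and M be natural numbers, τ : Fin n → Fin M an assignment of observations to tasks, K_X a real n×n symmetric positive semidefinite matrix, and λ > 0. For μ ∈ [0,1] define the matrix A_μ by (A_μ)ᵢⱼ = K_X ᵢⱼ if τ(i) = τ(j) and (A_μ)ᵢⱼ = μ · K_X ᵢⱼ otherwise. Then for all 0 ≤ μ₁ ≤ μ₂ ≤ 1, det(A_{μ₂} + λI) ≤ det(A_{μ₁} + λI). -/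
open Matrix

open scoped MatrixOrder

/-- If `∑ ν = 0`, then `t ↦ ∏ (1 + t ν)` is nonincreasing as long as all factors are nonnegative. -/
lemma prod_one_add_mul_le_of_sum_eq_zero {ι : Type*} (s : Finset ι) (ν : ι → ℝ)
    (hsum : ∑ i ∈ s, ν i = 0) {a b : ℝ} (ha : 0 ≤ a) (hab : a ≤ b)
    (hνa : ∀ i ∈ s, 0 ≤ 1 + a * ν i) (hνb : ∀ i ∈ s, 0 ≤ 1 + b * ν i) :
    ∏ i ∈ s, (1 + b * ν i) ≤ ∏ i ∈ s, (1 + a * ν i) := by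
  calc ∏ i ∈ s, (1 + b * ν i)
      ≤ ∏ i ∈ s, (1 + a * ν i) * Real.exp ((b - a) * ν i) := by
        refine Finset.prod_le_prod hνb fun i hi => ?_
        have hexp := mul_le_mul_of_nonneg_left
          (Real.add_one_le_exp ((b - a) * ν i)) (hνa i hi)
        nlinarith [mul_nonneg (mul_nonneg ha (sub_nonneg.2 hab)) (sq_nonneg (ν i))]
    _ = ∏ i ∈ s, (1 + a * ν i) := by
        rw [Finset.prod_mul_distrib, ← Real.exp_sum, ← Finset.mul_sum, hsum]
        simp

namespace Matrix

lemma PosSemidef.blockPart {n : Type*} [Fintype n] {K : Matrix n n ℝ} (hK : K.PosSemidef)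
    {α : Type*} [Fintype α] [DecidableEq α] (τ : n → α) :
    (of fun i j => if τ i = τ j then K i j else 0).PosSemidef := by
  have h := hK.hadamard
    (posSemidef_self_mul_conjTranspose (of fun i t => if τ i = t then (1 : ℝ) else 0))
  refine (congrArg PosSemidef ?_).mpr h
  ext i j
  simp [mul_apply, eq_comm]

variable {n : Type*} [Fintype n] [DecidableEq n]

lemma IsHermitian.conjStarAlgAut_one_add_smul {S : Matrix n n ℝ} (hS : S.IsHermitian) (t : ℝ) :
    Unitary.conjStarAlgAut ℝ _ (star hS.eigenvectorUnitary) (1 + t • S) =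
      diagonal fun i => 1 + t * hS.eigenvalues i := by
  rw [map_add, map_one, map_smul, hS.conjStarAlgAut_star_eigenvectorUnitary, ← diagonal_one,
    ← diagonal_smul, diagonal_add]
  simp

lemma IsHermitian.det_one_add_smul {S : Matrix n n ℝ} (hS : S.IsHermitian) (t : ℝ) :
    (1 + t • S).det = ∏ i, (1 + t * hS.eigenvalues i) := by
  rw [← det_diagonal, ← hS.conjStarAlgAut_one_add_smul, Unitary.conjStarAlgAut_star_apply,
    det_mul_right_comm, Unitary.coe_star_mul_self, one_mul]

lemma PosSemidef.one_add_eigenvalues_nonneg {S : Matrix n n ℝ} (hS : S.IsHermitian)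
    (h : (1 + S).PosSemidef) (i : n) : 0 ≤ 1 + hS.eigenvalues i := by
  have hdiag := h.conjTranspose_mul_mul_same (hS.eigenvectorUnitary : Matrix n n ℝ)
  have haut := hS.conjStarAlgAut_one_add_smul 1
  rw [one_smul, Unitary.conjStarAlgAut_star_apply, star_eq_conjTranspose] at haut
  rw [haut, posSemidef_diagonal_iff] at hdiag
  simpa using hdiag i

/-- If `D` is positive definite, `D + N` is positive semidefinite and `D⁻¹ N` is traceless, then
`t ↦ det (D + t N)` is nonincreasing on `[0, 1]`. -/
theorem PosDef.det_add_smul_antitone {D N : Matrix n n ℝ} (hD : D.PosDef)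
    (hDN : (D + N).PosSemidef) (htr : (N * D⁻¹).trace = 0)
    {a b : ℝ} (ha : 0 ≤ a) (hab : a ≤ b) (hb : b ≤ 1) :
    (D + b • N).det ≤ (D + a • N).det := by
  set R := CFC.sqrt D⁻¹
  have hRR : R * R = D⁻¹ := CFC.sqrt_mul_sqrt_self _ hD.inv.posSemidef.nonneg
  have hRh : Rᴴ = R := (CFC.sqrt_nonneg D⁻¹).posSemidef.isHermitian
  have hdet : IsUnit D.det := (isUnit_iff_isUnit_det _).1 hD.isUnit
  have hRDR : R * D * R = 1 := by
    rw [mul_eq_one_comm, ← mul_assoc, hRR, nonsing_inv_mul _ hdet]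
  have hN : N.IsHermitian := by
    simpa using hDN.isHermitian.sub hD.isHermitian
  have hS : (R * N * R).IsHermitian := by
    simpa only [hRh] using isHermitian_conjTranspose_mul_mul R hN
  have hfactor (t : ℝ) : (D + t • N).det = (1 + t • (R * N * R)).det * D.det := by
    have hleft : (1 + t • (R * N * R)).det = (1 + t • (N * D⁻¹)).det := by
      rw [mul_assoc, ← mul_smul_comm, det_one_add_mul_comm, smul_mul_assoc, mul_assoc, hRR]
    rw [hleft, ← det_mul, add_mul, one_mul, smul_mul_assoc, mul_assoc, nonsing_inv_mul _ hdet,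
      mul_one]
  have hsum : ∑ i, hS.eigenvalues i = 0 := by
    have h : (R * N * R).trace = 0 := by rw [mul_assoc, trace_mul_comm, mul_assoc, hRR, htr]
    simpa using hS.trace_eq_sum_eigenvalues.symm.trans h
  have hpsd : (1 + R * N * R).PosSemidef := by
    have h := hDN.conjTranspose_mul_mul_same R
    rwa [hRh, mul_add, add_mul, hRDR] at h
  have hnonneg {t : ℝ} (ht₀ : 0 ≤ t) (ht₁ : t ≤ 1) (i : n) : 0 ≤ 1 + t * hS.eigenvalues i := by
    nlinarith [mul_nonneg ht₀ (hpsd.one_add_eigenvalues_nonneg hS i)]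
  rw [hfactor, hfactor, hS.det_one_add_smul, hS.det_one_add_smul]
  exact mul_le_mul_of_nonneg_right
    (prod_one_add_mul_le_of_sum_eq_zero _ _ hsum ha hab
      (fun i _ => hnonneg ha (hab.trans hb) i) fun i _ => hnonneg (ha.trans hab) hb i)
    hD.det_pos.le

/-- The inverse of a symmetric block diagonal matrix is block diagonal. -/
lemma IsHermitian.inv_apply_eq_zero_of_ne {α : Type*} [LinearOrder α] (τ : n → α)
    {D : Matrix n n ℝ} (hD : D.IsHermitian) (hunit : IsUnit D)
    (hblock : ∀ i j, τ i ≠ τ j → D i j = 0) {i j : n} (hij : τ i ≠ τ j) : D⁻¹ i j = 0 := by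
  let _ := hunit.invertible
  have hinv : BlockTriangular D⁻¹ τ :=
    blockTriangular_inv_of_blockTriangular fun i j h => hblock i j h.ne'
  rcases hij.lt_or_gt with h | h
  · simpa [hinv h] using (hD.inv.apply i j).symm
  · exact hinv h

end Matrix

/-- Theorem 5 of the paper: with uniform inter-task similarity `μ`, the determinant
`det(A_μ + λI)` of the regularized augmented Gram matrix is nonincreasing in `μ`,
where `(A_μ)ᵢⱼ = K_X i j` if observations `i, j` belong to the same task and
`(A_μ)ᵢⱼ = μ · K_X i j` otherwise. -/
theorem det_uniform_similarity_antitone (n M : ℕ) (τ : Fin n → Fin M)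
    (KX : Matrix (Fin n) (Fin n) ℝ) (hKX : KX.PosSemidef)
    (lam : ℝ) (hlam : 0 < lam)
    (μ₁ μ₂ : ℝ) (hμ₁ : 0 ≤ μ₁) (hμ₁₂ : μ₁ ≤ μ₂) (hμ₂ : μ₂ ≤ 1) :
    ((Matrix.of fun i j => if τ i = τ j then KX i j else μ₂ * KX i j) +
        lam • (1 : Matrix (Fin n) (Fin n) ℝ)).det ≤
    ((Matrix.of fun i j => if τ i = τ j then KX i j else μ₁ * KX i j) +
        lam • (1 : Matrix (Fin n) (Fin n) ℝ)).det := by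
  set D : Matrix (Fin n) (Fin n) ℝ := (of fun i j => if τ i = τ j then KX i j else 0) +
    lam • (1 : Matrix (Fin n) (Fin n) ℝ) with hD_def
  set N : Matrix (Fin n) (Fin n) ℝ := of fun i j => if τ i = τ j then 0 else KX i j with hN_def
  have hone : (lam • (1 : Matrix (Fin n) (Fin n) ℝ)).PosDef := PosDef.one.smul hlam
  have hsplit (t : ℝ) : (of fun i j => if τ i = τ j then KX i j else t * KX i j) +
      lam • (1 : Matrix (Fin n) (Fin n) ℝ) = D + t • N := by
    ext i j
    by_cases h : τ i = τ j <;> simp [hD_def, hN_def, h, add_comm]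
  have hD : D.PosDef := PosDef.posSemidef_add (hKX.blockPart τ) hone
  have hDN : (D + N).PosSemidef := by
    have h := hsplit 1
    simp only [one_mul, ite_self, one_smul] at h
    rw [← h]
    exact hKX.add hone.posSemidef
  have hDblock (i j : Fin n) (h : τ i ≠ τ j) : D i j = 0 := by
    have hij : i ≠ j := fun e => h (congrArg τ e)
    simp [hD_def, h, hij]
  have htr : (N * D⁻¹).trace = 0 := by
    simp only [trace, diag_apply, mul_apply]
    refine Finset.sum_eq_zero fun i _ => Finset.sum_eq_zero fun j _ => ?_
    by_cases h : τ i = τ j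
    · simp [hN_def, h]
    · rw [hD.isHermitian.inv_apply_eq_zero_of_ne τ hD.isUnit hDblock (Ne.symm h), mul_zero]
  rw [hsplit, hsplit]
  exact hD.det_add_smul_antitone hDN htr hμ₁ hμ₁₂ hμ₂
end

section
/- Let n and M be natural numbers, τ : Fin n → Fin M an assignment of observations to tasks, K_X a real n×n symmetric positive semidefinite matrix, and μ a real number with 0 ≤ μ ≤ 1. Then the matrix A_μ defined by (A_μ)ᵢⱼ = K_X ᵢⱼ if τ(i) = τ(j) and (A_μ)ᵢⱼ = μ · K_X ᵢⱼ otherwise is symmetric positive semidefinite. -/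
open Matrix

/-- The uniform-similarity augmented Gram matrix `A_μ`, with entries `K_X i j` when
observations `i, j` belong to the same task and `μ · K_X i j` otherwise, is positive
semidefinite whenever `K_X` is positive semidefinite and `0 ≤ μ ≤ 1`. -/
theorem uniform_similarity_posSemidef (n M : ℕ) (τ : Fin n → Fin M)
    (KX : Matrix (Fin n) (Fin n) ℝ) (hKX : KX.PosSemidef)
    (μ : ℝ) (hμ0 : 0 ≤ μ) (hμ1 : μ ≤ 1) :
    (Matrix.of fun i j => if τ i = τ j then KX i j else μ * KX i j).PosSemidef := by
  have same_task : (KX ⊙ (1 : Matrix (Fin M) (Fin M) ℝ).submatrix τ τ).PosSemidef :=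
    hKX.hadamard (PosSemidef.one.submatrix τ)
  convert (same_task.smul (sub_nonneg.mpr hμ1)).add (hKX.smul hμ0) using 1
  ext i j
  by_cases h : τ i = τ j
  · simp [Matrix.one_apply, h]
    ring
  · simp [h]
end

section
/- Let d, p, n₁, n₂ be natural numbers and λ > 0 a real number. Let Φ₁ be a real d×n₁ matrix, Ψ₁ a real p×n₁ matrix, Φ₂ a real d×n₂ matrix, and Ψ₂ a real p×n₂ matrix. Define K₁ = Φ₁ᵀΦ₁, K₂ = Φ₂ᵀΦ₂, L₁ = Ψ₁ᵀΨ₁, L₂ = Ψ₂ᵀΨ₂, K₁₂ = Φ₁ᵀΦ₂, L₂₁ = Ψ₂ᵀΨ₁, and the operators O₁ = Ψ₁(K₁+λI)⁻¹Φ₁ᵀ and O₂ = Ψ₂(K₂+λI)⁻¹Φ₂ᵀ (both p×d matrices). Then the squared Frobenius norm satisfies ‖O₁ − O₂‖² = tr((K₁+λI)⁻¹K₁(K₁+λI)⁻¹L₁) − 2·tr((K₁+λI)⁻¹K₁₂(K₂+λI)⁻¹L₂₁) + tr((K₂+λI)⁻¹K₂(K₂+λI)⁻¹L₂). -/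
open Matrix

/-- The Frobenius inner product of two operators `Ψ * A * Φᵀ` depends on the feature matrices only
through their Gram matrices. -/
theorem trace_transpose_mul_eq_trace_gram {d p m n R : Type*} [Fintype d] [Fintype p] [Fintype m]
    [Fintype n] [CommRing R] (Φ : Matrix d m R) (Ψ : Matrix p m R) (A : Matrix m m R)
    (Φ' : Matrix d n R) (Ψ' : Matrix p n R) {B : Matrix n n R} (hB : B.IsSymm) :
    trace ((Ψ' * B * Φ'ᵀ)ᵀ * (Ψ * A * Φᵀ)) = trace (A * (Φᵀ * Φ') * B * (Ψ'ᵀ * Ψ)) := by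
  have h : (Ψ' * B * Φ'ᵀ)ᵀ * (Ψ * A * Φᵀ) = (Φ' * B * Ψ'ᵀ * Ψ) * (A * Φᵀ) := by
    simp only [transpose_mul, transpose_transpose, hB.eq, Matrix.mul_assoc]
  rw [h, trace_mul_comm]
  simp only [Matrix.mul_assoc]

/-- The inverse of a regularized Gram matrix is symmetric. -/
theorem isSymm_inv_gram_add_smul_one {d n R : Type*} [Fintype d] [Fintype n] [DecidableEq n]
    [CommRing R] (Φ : Matrix d n R) (c : R) :
    (Φᵀ * Φ + c • (1 : Matrix n n R))⁻¹.IsSymm := by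
  simp [IsSymm, transpose_nonsing_inv]

/-- Eq. (19) of the paper: closed-form expression, via the kernel trick, for the squared
Frobenius distance `‖O₁ − O₂‖² = tr((O₁ − O₂)ᵀ(O₁ − O₂))` between two empirical conditional
kernel embedding operators `Oₘ = Ψₘ(Kₘ + λI)⁻¹Φₘᵀ`. -/
theorem cond_embedding_frobenius_dist (d p n₁ n₂ : ℕ) (lam : ℝ) (hlam : 0 < lam)
    (Φ₁ : Matrix (Fin d) (Fin n₁) ℝ) (Ψ₁ : Matrix (Fin p) (Fin n₁) ℝ)
    (Φ₂ : Matrix (Fin d) (Fin n₂) ℝ) (Ψ₂ : Matrix (Fin p) (Fin n₂) ℝ)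
    (K₁ : Matrix (Fin n₁) (Fin n₁) ℝ) (hK₁ : K₁ = Φ₁ᵀ * Φ₁)
    (K₂ : Matrix (Fin n₂) (Fin n₂) ℝ) (hK₂ : K₂ = Φ₂ᵀ * Φ₂)
    (L₁ : Matrix (Fin n₁) (Fin n₁) ℝ) (hL₁ : L₁ = Ψ₁ᵀ * Ψ₁)
    (L₂ : Matrix (Fin n₂) (Fin n₂) ℝ) (hL₂ : L₂ = Ψ₂ᵀ * Ψ₂)
    (K₁₂ : Matrix (Fin n₁) (Fin n₂) ℝ) (hK₁₂ : K₁₂ = Φ₁ᵀ * Φ₂)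
    (L₂₁ : Matrix (Fin n₂) (Fin n₁) ℝ) (hL₂₁ : L₂₁ = Ψ₂ᵀ * Ψ₁)
    (O₁ : Matrix (Fin p) (Fin d) ℝ)
    (hO₁ : O₁ = Ψ₁ * (K₁ + lam • (1 : Matrix (Fin n₁) (Fin n₁) ℝ))⁻¹ * Φ₁ᵀ)
    (O₂ : Matrix (Fin p) (Fin d) ℝ)
    (hO₂ : O₂ = Ψ₂ * (K₂ + lam • (1 : Matrix (Fin n₂) (Fin n₂) ℝ))⁻¹ * Φ₂ᵀ) :
    Matrix.trace ((O₁ - O₂)ᵀ * (O₁ - O₂)) =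
      Matrix.trace ((K₁ + lam • (1 : Matrix (Fin n₁) (Fin n₁) ℝ))⁻¹ * K₁ *
          (K₁ + lam • (1 : Matrix (Fin n₁) (Fin n₁) ℝ))⁻¹ * L₁)
      - 2 * Matrix.trace ((K₁ + lam • (1 : Matrix (Fin n₁) (Fin n₁) ℝ))⁻¹ * K₁₂ *
          (K₂ + lam • (1 : Matrix (Fin n₂) (Fin n₂) ℝ))⁻¹ * L₂₁)
      + Matrix.trace ((K₂ + lam • (1 : Matrix (Fin n₂) (Fin n₂) ℝ))⁻¹ * K₂ *
          (K₂ + lam • (1 : Matrix (Fin n₂) (Fin n₂) ℝ))⁻¹ * L₂) := by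
  subst hK₁ hK₂ hL₁ hL₂ hK₁₂ hL₂₁
  have hcross : trace (O₁ᵀ * O₂) = trace (O₂ᵀ * O₁) := by
    rw [← trace_transpose, transpose_mul, transpose_transpose]
  have hexpand : trace ((O₁ - O₂)ᵀ * (O₁ - O₂)) =
      trace (O₁ᵀ * O₁) - 2 * trace (O₂ᵀ * O₁) + trace (O₂ᵀ * O₂) := by
    simp only [transpose_sub, Matrix.sub_mul, Matrix.mul_sub, trace_sub, hcross]
    ring
  rw [hexpand, hO₁, hO₂,
    trace_transpose_mul_eq_trace_gram _ _ _ _ _ (isSymm_inv_gram_add_smul_one Φ₁ lam),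
    trace_transpose_mul_eq_trace_gram _ _ _ _ _ (isSymm_inv_gram_add_smul_one Φ₂ lam),
    trace_transpose_mul_eq_trace_gram _ _ _ _ _ (isSymm_inv_gram_add_smul_one Φ₂ lam)]
end

section
/- Let d and n be natural numbers, λ > 0 a real number, Φ a real d×n matrix, and φ₀ ∈ ℝ^d. Define K = ΦᵀΦ, k = Φᵀφ₀, and σ² = φ₀ᵀφ₀ − kᵀ(K + λI)⁻¹k. Then λ · ‖(K + λI)⁻¹k‖² ≤ σ², where ‖·‖ is the Euclidean norm on ℝⁿ; equivalently, kᵀ(K+λI)⁻²k ≤ σ²/λ. -/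
open Matrix

/-- The ridge-regularized Gram matrix is invertible. -/
theorem isUnit_det_gram_add_smul_one {m n : Type*} [Fintype m] [Fintype n] [DecidableEq n]
    {lam : ℝ} (hlam : 0 < lam) (Φ : Matrix m n ℝ) :
    IsUnit (Φᵀ * Φ + lam • (1 : Matrix n n ℝ)).det := by
  have hK : (Φᵀ * Φ).PosSemidef := by
    simpa using Matrix.posSemidef_conjTranspose_mul_self Φ
  exact (Matrix.PosDef.posSemidef_add hK (Matrix.PosDef.one.smul hlam)).det_pos.ne'.isUnit

/-- A solution `w` of the ridge normal equations satisfies `λ wᵀw ≤ φ₀ᵀφ₀ - (Φᵀφ₀)ᵀw`. -/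
theorem mul_dotProduct_self_le_of_normal_equations {m n : Type*} [Fintype m] [Fintype n]
    [DecidableEq n] {lam : ℝ} {Φ : Matrix m n ℝ} {φ₀ : m → ℝ} {w : n → ℝ}
    (hw : (Φᵀ * Φ + lam • (1 : Matrix n n ℝ)) *ᵥ w = Φᵀ *ᵥ φ₀) :
    lam * (w ⬝ᵥ w) ≤ φ₀ ⬝ᵥ φ₀ - (Φᵀ *ᵥ φ₀) ⬝ᵥ w := by
  have hadj (v : m → ℝ) : (Φᵀ *ᵥ v) ⬝ᵥ w = v ⬝ᵥ (Φ *ᵥ w) := by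
    rw [Matrix.mulVec_transpose, Matrix.dotProduct_mulVec]
  have henergy : (Φ *ᵥ w) ⬝ᵥ (Φ *ᵥ w) + lam * (w ⬝ᵥ w) = φ₀ ⬝ᵥ (Φ *ᵥ w) := by
    rw [← hadj, ← hadj, ← hw, Matrix.add_mulVec, Matrix.smul_mulVec, Matrix.one_mulVec,
      ← Matrix.mulVec_mulVec, add_dotProduct, smul_dotProduct, smul_eq_mul]
  have hres : 0 ≤ (φ₀ - Φ *ᵥ w) ⬝ᵥ (φ₀ - Φ *ᵥ w) :=
    Finset.sum_nonneg fun i _ => mul_self_nonneg _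
  rw [sub_dotProduct, dotProduct_sub, dotProduct_sub, dotProduct_comm (Φ *ᵥ w) φ₀] at hres
  rw [hadj]
  linarith

/-- Bound on the ridge weight vector `w = (K + λI)⁻¹ k` in terms of the squared
confidence width: `λ‖w‖² ≤ σ² = φ₀ᵀφ₀ − kᵀ(K + λI)⁻¹k`, where `K = ΦᵀΦ`, `k = Φᵀφ₀`,
and `‖·‖` is the Euclidean norm. -/
theorem weight_norm_le_width (d n : ℕ) (lam : ℝ) (hlam : 0 < lam)
    (Φ : Matrix (Fin d) (Fin n) ℝ) (φ₀ : Fin d → ℝ) :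
    lam * ‖(WithLp.equiv 2 (Fin n → ℝ)).symm
        ((Φᵀ * Φ + lam • (1 : Matrix (Fin n) (Fin n) ℝ))⁻¹.mulVec (Φᵀ.mulVec φ₀))‖ ^ 2 ≤
      φ₀ ⬝ᵥ φ₀ -
        (Φᵀ.mulVec φ₀) ⬝ᵥ
          ((Φᵀ * Φ + lam • (1 : Matrix (Fin n) (Fin n) ℝ))⁻¹.mulVec (Φᵀ.mulVec φ₀)) := by
  have hw := mul_dotProduct_self_le_of_normal_equations (lam := lam) (Φ := Φ) (φ₀ := φ₀)
    (w := (Φᵀ * Φ + lam • (1 : Matrix (Fin n) (Fin n) ℝ))⁻¹ *ᵥ (Φᵀ *ᵥ φ₀)) (by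
      rw [Matrix.mulVec_mulVec, Matrix.mul_nonsing_inv _ (isUnit_det_gram_add_smul_one hlam Φ),
        Matrix.one_mulVec])
  rw [EuclideanSpace.real_norm_sq_eq]
  simpa [dotProduct, sq] using hw
end
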